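/- Let (T, l) be a labeled tree with non-degenerate labeling l : V(T) → ℝ≥0, and let A be a nonempty bounded subset of the ultrametric space (V(T), d_l). Then the vertex set V(H_A) of the hull H_A of A is also a bounded subset of (V(T), d_l). -/

import Mathlib

open SimpleGraph

/-- For a tree `G` with labeling `l`, the "ultrametric" `d_l`: the maximum of the labels of the
vertices of the unique path joining `u` and `v` (and `0` if `u = v`). -/
noncomputable def treeDist {V : Type*} (G : SimpleGraph V) (hG : G.IsTree) (l : V → NNReal)
    (u v : V) : NNReal :=
  letI := Classical.decEq V
  if u = v then 0 else ((hG.existsUnique_path u v).choose.support.map l).foldr max 0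

/-- A labeling is non-degenerate if `max {l u, l v} > 0` for every edge `{u, v}`. -/
def Nondeg {V : Type*} (G : SimpleGraph V) (l : V → NNReal) : Prop :=
  ∀ u v : V, G.Adj u v → 0 < max (l u) (l v)

/-- A distance function is separable if there is a countable dense subset. -/
def SeparableWith {α : Type*} (d : α → α → NNReal) : Prop :=
  ∃ S : Set α, S.Countable ∧ ∀ x : α, ∀ ε : NNReal, 0 < ε → ∃ s ∈ S, d x s < ε

/-- A set is bounded if it is contained in a closed ball of positive radius. -/
def BoundedWith {α : Type*} (d : α → α → NNReal) (A : Set α) : Prop :=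
  ∃ c : α, ∃ r : NNReal, 0 < r ∧ ∀ x ∈ A, d c x ≤ r

/-- A distance function is locally finite if every bounded set is finite. -/
def LocallyFiniteWith {α : Type*} (d : α → α → NNReal) : Prop :=
  ∀ A : Set α, BoundedWith d A → A.Finite

/-- A graph is a ray if its vertices can be enumerated without repetition as
`x₁, x₂, …` with edges exactly `{xₙ, xₙ₊₁}`. -/
def IsRay {W : Type*} (R : SimpleGraph W) : Prop :=
  ∃ v : ℕ → W, Function.Bijective v ∧
    ∀ a b : W, R.Adj a b ↔ ∃ n : ℕ, (a = v n ∧ b = v (n + 1)) ∨ (a = v (n + 1) ∧ b = v n)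

/-- A tree is a star graph if some vertex `c` (the center) is adjacent to every other vertex. -/
def IsStar {W : Type*} (S : SimpleGraph W) : Prop :=
  S.IsTree ∧ ∃ c : W, ∀ v : W, v ≠ c → S.Adj c v

/-! The closed ball of radius `R ≥ l c` about a vertex `c` consists of the vertices that can be
reached from `c` through labels at most `R`, so it induces a subtree. A bounded set lies in such a
ball, and therefore so does its hull. -/

theorem foldr_max_bot_le_iff {α : Type*} [LinearOrder α] [OrderBot α] {L : List α} {r : α} :
    L.foldr max ⊥ ≤ r ↔ ∀ x ∈ L, x ≤ r :=
  ⟨fun h _ hx ↦ (List.le_max_of_le hx le_rfl).trans h, List.max_le_of_forall_le L r⟩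

section SubtreeInduce

variable {V : Type*} {G : SimpleGraph V}

theorem connected_induce_setOf_exists_walk {c : V} {P : V → Prop} (hc : P c) :
    (G.induce {v | ∃ p : G.Walk c v, ∀ w ∈ p.support, P w}).Connected := by
  classical
  refine induce_connected_of_patches c ⟨Walk.nil, by simpa using hc⟩ ?_
  rintro v ⟨p, hp⟩
  refine ⟨{w | w ∈ p.support}, fun w hw ↦ ?_, p.start_mem_support, p.end_mem_support,
    p.connected_induce_support.preconnected _ _⟩
  exact ⟨p.takeUntil w hw, fun x hx ↦ hp x (p.support_takeUntil_subset_support hw hx)⟩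

theorem verts_subset_of_isTree_induce {A S : Set V} {H : G.Subgraph}
    (hH : H ∈ lowerBounds {H : G.Subgraph | H.coe.IsTree ∧ A ⊆ H.verts})
    (hS : (G.induce S).IsTree) (hAS : A ⊆ S) : H.verts ⊆ S := by
  rw [induce_eq_coe_induce_top] at hS
  exact (hH ⟨hS, hAS⟩).1

end SubtreeInduce

section TreeDist

variable {V : Type*} {G : SimpleGraph V} (hG : G.IsTree) {l : V → NNReal} {c u v : V} {r : NNReal}

theorem treeDist_self : treeDist G hG l u u = 0 := by
  simp [treeDist]

theorem treeDist_le_iff_of_isPath (huv : u ≠ v) {p : G.Walk u v} (hp : p.IsPath) :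
    treeDist G hG l u v ≤ r ↔ ∀ w ∈ p.support, l w ≤ r := by
  have hpath : p = (hG.existsUnique_path u v).choose :=
    (hG.existsUnique_path u v).choose_spec.2 p hp
  rw [treeDist, if_neg huv, ← hpath, ← bot_eq_zero, foldr_max_bot_le_iff, List.forall_mem_map]

theorem treeDist_le_iff_exists_walk (hu : l u ≤ r) :
    treeDist G hG l u v ≤ r ↔ ∃ p : G.Walk u v, ∀ w ∈ p.support, l w ≤ r := by
  classical
  rcases eq_or_ne u v with rfl | huv
  · rw [treeDist_self]
    exact iff_of_true zero_le ⟨Walk.nil, by simpa using hu⟩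
  · constructor
    · intro hdist
      obtain ⟨p, hp, -⟩ := hG.existsUnique_path u v
      exact ⟨p, (treeDist_le_iff_of_isPath hG huv hp).1 hdist⟩
    · rintro ⟨p, hp⟩
      exact (treeDist_le_iff_of_isPath hG huv p.bypass_isPath).2
        fun w hw ↦ hp w (p.support_bypass_subset_support hw)

theorem isTree_induce_setOf_treeDist_le (hc : l c ≤ r) :
    (G.induce {v | treeDist G hG l c v ≤ r}).IsTree := by
  have hball : {v | treeDist G hG l c v ≤ r} =
      {v | ∃ p : G.Walk c v, ∀ w ∈ p.support, l w ≤ r} :=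
    Set.ext fun _ ↦ treeDist_le_iff_exists_walk hG hc
  refine ⟨?_, hG.isAcyclic.induce _⟩
  rw [hball]
  exact connected_induce_setOf_exists_walk (P := (l · ≤ r)) hc

end TreeDist

theorem hull_verts_bounded_general {V : Type*} (G : SimpleGraph V) (hG : G.IsTree)
    (l : V → NNReal) (A : Set V) (hbdd : BoundedWith (treeDist G hG l) A) (HA : G.Subgraph)
    (hHA : IsLeast {H : G.Subgraph | H.coe.IsTree ∧ A ⊆ H.verts} HA) :
    BoundedWith (treeDist G hG l) HA.verts := by
  obtain ⟨c, r, hr, hA⟩ := hbdd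
  have hball : (G.induce {v | treeDist G hG l c v ≤ max r (l c)}).IsTree :=
    isTree_induce_setOf_treeDist_le hG (le_max_right r (l c))
  have hA_ball : A ⊆ {v | treeDist G hG l c v ≤ max r (l c)} :=
    fun a ha ↦ (hA a ha).trans (le_max_left r (l c))
  exact ⟨c, max r (l c), lt_max_of_lt_left hr, verts_subset_of_isTree_induce hHA.2 hball hA_ball⟩

theorem hull_verts_bounded {V : Type*} (G : SimpleGraph V) (hG : G.IsTree)
    (l : V → NNReal) (hl : Nondeg G l) (A : Set V) (hA : A.Nonempty)
    (hbdd : BoundedWith (treeDist G hG l) A) (HA : G.Subgraph)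
    (hHA : IsLeast {H : G.Subgraph | H.coe.IsTree ∧ A ⊆ H.verts} HA) :
    BoundedWith (treeDist G hG l) HA.verts :=
  hull_verts_bounded_general G hG l A hbdd HA hHA
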